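/- Let n ≥ 2 and 0 < D < π, and let z ∈ S^n. If X ⊆ S^n is a Borel measurable set with geodesic diameter diam X ≤ D and σ(X) = σ(B(z, D/2)), then there exists w ∈ S^n such that the closure of X in S^n equals the closed geodesic ball B(w, D/2). -/

import Mathlib

/-!
Replacing two closed sets by their polarizations with respect to the same mirror keeps their volumes
and does not increase the largest distance between them. Maximizing a weight that increases towards
a point `e` over all such pairs produces, up to null sets, balls about `e`. Hence, if all distances
between `A` and `B` are at most `D < π` and `A` is at least as large as a ball of radius `r`, then
`B` is at most as large as a ball of radius `D - r`. With `A = B` this is the isodiametric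
inequality; with `B` the antipode of the complement of a parallel set of `A` it bounds the volumes
of parallel sets from below.

In the equality case, the parallel set `L` of the closure at a small distance `s` is extremal for
diameter `D + 2 * s`, and every boundary point of `L` has exactly one partner in `L` at that
distance. Polarizing `L` keeps it extremal, which forces the reflection that exchanges two boundary
points to send the partner of one to the partner of the other. Therefore all pairs of partners have
the same sum, hence the same midpoint `w`, and the boundary of `L` lies on the sphere of radius
`D / 2 + s` about `w`. So the closure is contained in the ball of radius `D / 2` about `w`, and
equals it because of its volume.
-/

open MeasureTheory

noncomputable section

/-- Euclidean space `ℝ^{n+1}`. -/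
abbrev Esp (n : ℕ) : Type := EuclideanSpace ℝ (Fin (n + 1))

/-- The unit sphere `S^n ⊆ ℝ^{n+1}`, as a subtype. -/
abbrev Sph (n : ℕ) : Type := Metric.sphere (0 : Esp n) 1

/-- Geodesic distance `d(x,y) = arccos ⟨x,y⟩` on the sphere. -/
def gd {n : ℕ} (x y : Sph n) : ℝ :=
  Real.arccos (inner (𝕜 := ℝ) (x : Esp n) (y : Esp n))

/-- Closed geodesic ball `B(z,r) = {x ∈ Sⁿ : d(x,z) ≤ r}`. -/
def sphBall {n : ℕ} (z : Sph n) (r : ℝ) : Set (Sph n) := {x | gd x z ≤ r}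

/-- Geodesic diameter `diam X = sup {d(x,y) : x, y ∈ X}`. -/
def sphDiam {n : ℕ} (X : Set (Sph n)) : ℝ :=
  sSup {r | ∃ x ∈ X, ∃ y ∈ X, r = gd x y}

/-- Spherical volume: the `n`-dimensional (Hausdorff) surface measure on `S^n`. -/
def sphVol (n : ℕ) : Measure (Sph n) := μH[(n : ℝ)]

open Set Filter Topology

section GeodesicDistance
variable {n : ℕ}

lemma gd_eq_angle (x y : Sph n) : gd x y = InnerProductGeometry.angle (x : Esp n) y := by
  simp [gd, InnerProductGeometry.angle]

lemma gd_nonneg (x y : Sph n) : 0 ≤ gd x y := Real.arccos_nonneg _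

lemma gd_le_pi (x y : Sph n) : gd x y ≤ Real.pi := Real.arccos_le_pi _

lemma gd_mem_Icc (x y : Sph n) : gd x y ∈ Icc 0 Real.pi := ⟨gd_nonneg x y, gd_le_pi x y⟩

lemma gd_comm (x y : Sph n) : gd x y = gd y x := by
  simp only [gd, real_inner_comm]

lemma gd_triangle (x y z : Sph n) : gd x z ≤ gd x y + gd y z := by
  simpa only [gd_eq_angle] using InnerProductGeometry.angle_le_angle_add_angle (x : Esp n) y z

lemma gd_neg_right (x y : Sph n) : gd x (-y) = Real.pi - gd x y := by
  simp [gd, Real.arccos_neg]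

lemma gd_neg_left (x y : Sph n) : gd (-x) y = Real.pi - gd x y := by
  rw [gd_comm, gd_neg_right, gd_comm]

lemma cos_gd (x y : Sph n) : Real.cos (gd x y) = inner ℝ (x : Esp n) y := by
  rw [gd_eq_angle, InnerProductGeometry.cos_angle]
  simp

lemma gd_le_gd_iff {x y z w : Sph n} :
    gd x y ≤ gd z w ↔ inner ℝ (z : Esp n) w ≤ inner ℝ (x : Esp n) y := by
  rw [← cos_gd, ← cos_gd]
  exact (Real.strictAntiOn_cos.le_iff_ge (gd_mem_Icc z w) (gd_mem_Icc x y)).symm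

lemma gd_lt_gd_iff {x y z w : Sph n} :
    gd x y < gd z w ↔ inner ℝ (z : Esp n) w < inner ℝ (x : Esp n) y := by
  rw [← not_le, gd_le_gd_iff, not_le]

lemma gd_eq_zero_iff {x y : Sph n} : gd x y = 0 ↔ x = y := by
  rw [gd_eq_angle, InnerProductGeometry.angle, Real.arccos_eq_zero, Subtype.ext_iff,
    ← inner_eq_one_iff_of_norm_eq_one (𝕜 := ℝ) (norm_eq_of_mem_sphere x) (norm_eq_of_mem_sphere y),
    norm_eq_of_mem_sphere, norm_eq_of_mem_sphere, mul_one, div_one]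
  have := real_inner_le_norm (x : Esp n) y
  rw [norm_eq_of_mem_sphere, norm_eq_of_mem_sphere, mul_one] at this
  exact this.ge_iff_eq

lemma gd_self (x : Sph n) : gd x x = 0 := gd_eq_zero_iff.mpr rfl

lemma gd_pos_iff {x y : Sph n} : 0 < gd x y ↔ x ≠ y :=
  (gd_nonneg x y).lt_iff_ne.trans (ne_comm.trans gd_eq_zero_iff.not)

@[fun_prop]
lemma continuous_gd {α : Type*} [TopologicalSpace α] {f g : α → Sph n} (hf : Continuous f)
    (hg : Continuous g) : Continuous fun a => gd (f a) (g a) := by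
  unfold gd
  fun_prop

lemma isClosed_sphBall (z : Sph n) (r : ℝ) : IsClosed (sphBall z r) :=
  isClosed_le (by fun_prop) continuous_const

end GeodesicDistance

section GreatCircles
variable {n : ℕ}

lemma exists_norm_one_eq_norm_smul {E : Type*} [NormedAddCommGroup E] [NormedSpace ℝ E]
    [Nontrivial E] (v : E) : ∃ t : E, ‖t‖ = 1 ∧ v = ‖v‖ • t := by
  rcases eq_or_ne v 0 with rfl | hv
  · obtain ⟨t, ht⟩ := exists_norm_eq E zero_le_one
    exact ⟨t, ht, by simp⟩
  · exact ⟨‖v‖⁻¹ • v, by simpa using norm_smul_inv_norm (𝕜 := ℝ) hv,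
      (smul_inv_smul₀ (norm_ne_zero_iff.mpr hv) v).symm⟩

lemma norm_sub_cos_gd_smul (p q : Sph n) :
    ‖(q : Esp n) - Real.cos (gd p q) • (p : Esp n)‖ = Real.sin (gd p q) := by
  have hsin : 0 ≤ Real.sin (gd p q) := Real.sin_nonneg_of_mem_Icc (gd_mem_Icc p q)
  rw [← sq_eq_sq₀ (norm_nonneg _) hsin, norm_sub_sq_real, inner_smul_right, real_inner_comm,
    ← cos_gd, norm_smul, mul_pow, Real.norm_eq_abs, sq_abs, Real.sin_sq]
  simp
  ring

lemma exists_eq_cos_smul_add_sin_smul [NeZero n] (p q : Sph n) :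
    ∃ t : Esp n, ‖t‖ = 1 ∧ inner ℝ (p : Esp n) t = 0 ∧
      (q : Esp n) = Real.cos (gd p q) • (p : Esp n) + Real.sin (gd p q) • t := by
  have : Fact (Module.finrank ℝ (Esp n) = n + 1) := ⟨finrank_euclideanSpace_fin⟩
  have hp : (p : Esp n) ≠ 0 := ne_zero_of_mem_unit_sphere p
  have : Nontrivial (ℝ ∙ (p : Esp n))ᗮ :=
    Module.nontrivial_of_finrank_pos (R := ℝ) (by
      rw [Submodule.finrank_orthogonal_span_singleton (n := n) hp]; exact NeZero.pos n)
  set v : Esp n := q - Real.cos (gd p q) • (p : Esp n) with hv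
  have hpv : v ∈ (ℝ ∙ (p : Esp n))ᗮ := by
    rw [Submodule.mem_orthogonal_singleton_iff_inner_right, inner_sub_right, inner_smul_right,
      cos_gd]
    simp
  obtain ⟨t, ht, hvt⟩ := exists_norm_one_eq_norm_smul (⟨v, hpv⟩ : (ℝ ∙ (p : Esp n))ᗮ)
  refine ⟨t, ht, Submodule.mem_orthogonal_singleton_iff_inner_right.mp t.2, ?_⟩
  have hvt' : v = Real.sin (gd p q) • (t : Esp n) := by
    rw [← norm_sub_cos_gd_smul]; exact congrArg Subtype.val hvt
  rw [← hvt', hv, add_sub_cancel]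

lemma exists_unit_speed_geodesic [NeZero n] (p q : Sph n) :
    ∃ g : ℝ → Sph n, Continuous g ∧ g 0 = p ∧ g (gd p q) = q ∧
      ∀ a b, |a - b| ≤ Real.pi → gd (g a) (g b) = |a - b| := by
  obtain ⟨t, ht, hpt, hq⟩ := exists_eq_cos_smul_add_sin_smul p q
  have inner_eq (a b : ℝ) : inner ℝ (Real.cos a • (p : Esp n) + Real.sin a • t)
      (Real.cos b • (p : Esp n) + Real.sin b • t) = Real.cos (a - b) := by
    simp only [inner_add_left, inner_add_right, real_inner_smul_left, inner_smul_right, hpt,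
      real_inner_comm (p : Esp n) t, real_inner_self_eq_norm_sq, ht, Real.cos_sub,
      norm_eq_of_mem_sphere]
    ring
  have norm_eq (a : ℝ) : ‖Real.cos a • (p : Esp n) + Real.sin a • t‖ = 1 := by
    rw [← sq_eq_sq₀ (norm_nonneg _) zero_le_one, ← real_inner_self_eq_norm_sq, inner_eq]
    simp
  refine ⟨fun a => ⟨Real.cos a • (p : Esp n) + Real.sin a • t, by simpa using norm_eq a⟩,
    by fun_prop, by ext1; simp, by ext1; exact hq.symm, fun a b hab => ?_⟩
  rw [gd, inner_eq, ← Real.cos_abs, Real.arccos_cos (abs_nonneg _) hab]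

lemma exists_gd_eq [NeZero n] (e : Sph n) {r : ℝ} (hr0 : 0 ≤ r) (hr1 : r ≤ Real.pi) :
    ∃ x, gd x e = r := by
  obtain ⟨g, -, hg0, -, hg⟩ := exists_unit_speed_geodesic e e
  refine ⟨g r, ?_⟩
  rw [← hg0, hg r 0 (by rwa [sub_zero, abs_of_nonneg hr0]), sub_zero, abs_of_nonneg hr0]

lemma closure_setOf_gd_lt [NeZero n] (w : Sph n) {r : ℝ} (hr : 0 < r) :
    closure {x | gd x w < r} = sphBall w r := by
  refine (isClosed_sphBall w r).closure_subset_iff.mpr (fun _ => le_of_lt (α := ℝ)) |>.antisymm ?_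
  intro x hx
  rcases (show gd x w ≤ r from hx).lt_or_eq with hlt | heq
  · exact subset_closure hlt
  obtain ⟨g, hgc, hg0, hg1, hg⟩ := exists_unit_speed_geodesic w x
  have hxr : g r = x := by rw [← heq, gd_comm, hg1]
  rw [← hxr]
  refine map_mem_closure hgc (closure_Ico hr.ne ▸ right_mem_Icc.mpr hr.le : r ∈ closure (Ico 0 r))
    fun a ha => ?_
  have hrπ : r ≤ Real.pi := heq ▸ gd_le_pi x w
  have habs : |a - 0| = a := by rw [sub_zero, abs_of_nonneg ha.1]
  change gd (g a) w < r
  rw [← hg0, hg a 0 (habs.trans_le (ha.2.le.trans hrπ)), habs]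
  exact ha.2

lemma isPreconnected_setOf_lt_gd [NeZero n] (w : Sph n) (r : ℝ) :
    IsPreconnected {x | r < gd x w} := by
  refine isPreconnected_of_forall (-w) fun x hx => ?_
  obtain ⟨g, hgc, hg0, hg1, hg⟩ := exists_unit_speed_geodesic (-w) x
  have hd : gd x (-w) = Real.pi - gd x w := gd_neg_right x w
  refine ⟨g '' Icc 0 (gd (-w) x), ?_, ⟨0, left_mem_Icc.mpr (gd_nonneg _ _), hg0⟩,
    ⟨_, right_mem_Icc.mpr (gd_nonneg _ _), hg1⟩, isPreconnected_Icc.image g hgc.continuousOn⟩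
  rintro _ ⟨a, ⟨ha0, ha1⟩, rfl⟩
  have hga : gd (g a) (-w) = a := by
    rw [← hg0, hg a 0 (by rw [sub_zero, abs_of_nonneg ha0]; exact ha1.trans (gd_le_pi _ _)),
      sub_zero, abs_of_nonneg ha0]
  rw [gd_neg_right] at hga
  rw [gd_comm, hd] at ha1
  change r < gd (g a) w
  have hx : r < gd x w := hx
  linarith

lemma sin_gd_smul_eq {x a q : Sph n} (h : gd x q = gd x a + gd a q) :
    Real.sin (gd x a) • (q : Esp n) =
      Real.sin (gd x q) • (a : Esp n) - Real.sin (gd a q) • (x : Esp n) := by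
  rw [← sub_eq_zero, ← inner_self_eq_zero (𝕜 := ℝ)]
  simp only [inner_sub_left, inner_sub_right, real_inner_smul_left, inner_smul_right,
    real_inner_comm (a : Esp n) q, real_inner_comm (x : Esp n) q, real_inner_comm (x : Esp n) a,
    ← cos_gd, gd_self, Real.cos_zero, h, Real.sin_add, Real.cos_add]
  linear_combination -Real.sin (gd a q) ^ 2 * Real.sin_sq_add_cos_sq (gd x a) -
    Real.sin (gd x a) ^ 2 * Real.sin_sq_add_cos_sq (gd a q)

lemma eq_of_gd_add_gd_eq {x a q q' : Sph n} (hx : x ≠ a) (hπ : gd x a < Real.pi)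
    (h : gd x q = gd x a + gd a q) (hxq : gd x q' = gd x q) (haq : gd a q' = gd a q) : q' = q := by
  have hsin : Real.sin (gd x a) ≠ 0 := (Real.sin_pos_of_pos_of_lt_pi (gd_pos_iff.mpr hx) hπ).ne'
  ext1
  refine smul_right_injective _ hsin ?_
  change Real.sin (gd x a) • (q' : Esp n) = Real.sin (gd x a) • (q : Esp n)
  rw [sin_gd_smul_eq h, sin_gd_smul_eq (hxq.trans (haq ▸ h)), hxq, haq]

lemma norm_add_eq_two_mul_cos_half_gd (p q : Sph n) :
    ‖(p : Esp n) + q‖ = 2 * Real.cos (gd p q / 2) := by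
  have hcos : 0 ≤ Real.cos (gd p q / 2) := Real.cos_nonneg_of_mem_Icc
    ⟨by linarith [gd_nonneg p q, Real.pi_pos], by linarith [gd_le_pi p q]⟩
  rw [← sq_eq_sq₀ (norm_nonneg _) (by positivity), norm_add_sq_real, ← cos_gd, mul_pow,
    Real.cos_sq, mul_div_cancel₀ _ two_ne_zero]
  simp
  ring

lemma exists_midpoint (p q : Sph n) :
    ∃ w : Sph n, (p : Esp n) + q = (2 * Real.cos (gd p q / 2)) • (w : Esp n) := by
  obtain ⟨w, hw, hpq⟩ := exists_norm_one_eq_norm_smul ((p : Esp n) + q)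
  exact ⟨⟨w, by simpa using hw⟩, by rw [← norm_add_eq_two_mul_cos_half_gd]; exact hpq⟩

lemma gd_midpoint {p q w : Sph n} (hpq : gd p q < Real.pi)
    (hw : (p : Esp n) + q = (2 * Real.cos (gd p q / 2)) • (w : Esp n)) : gd p w = gd p q / 2 := by
  have hcos : 0 < Real.cos (gd p q / 2) := Real.cos_pos_of_mem_Ioo
    ⟨by linarith [gd_nonneg p q, Real.pi_pos], by linarith⟩
  have hinner := congrArg (inner ℝ (p : Esp n)) hw
  rw [inner_add_right, inner_smul_right, ← cos_gd, ← cos_gd, ← cos_gd, gd_self,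
    Real.cos_zero] at hinner
  have h0 := gd_nonneg p q
  refine Real.injOn_cos (gd_mem_Icc p w) ⟨by linarith, by linarith⟩ ?_
  have hsq := Real.cos_sq (gd p q / 2)
  rw [mul_div_cancel₀ _ two_ne_zero] at hsq
  refine mul_left_cancel₀ hcos.ne' ?_
  linarith

end GreatCircles

section Mirror
variable {n : ℕ}

/-- The reflection of the sphere that exchanges `p` and `q`, i.e. the one in the hyperplane
orthogonal to `p - q`. For `p = q` it is the identity. -/
def mirror (p q : Sph n) : Sph n ≃ᵢ Sph n where
  toFun x := ⟨(ℝ ∙ ((p : Esp n) - q))ᗮ.reflection x, by simp⟩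
  invFun x := ⟨(ℝ ∙ ((p : Esp n) - q))ᗮ.reflection x, by simp⟩
  left_inv x := by ext1; simp
  right_inv x := by ext1; simp
  isometry_toFun x y := (ℝ ∙ ((p : Esp n) - q))ᗮ.reflection.isometry x y

@[simp]
lemma mirror_mirror (p q x : Sph n) : mirror p q (mirror p q x) = x := by
  ext1; exact Submodule.reflection_reflection _ (x : Esp n)

@[simp]
lemma mirror_left (p q : Sph n) : mirror p q p = q := by
  ext1; exact Submodule.reflection_sub (by simp)

@[simp]
lemma mirror_right (p q : Sph n) : mirror p q q = p := by
  have h := mirror_mirror p q p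
  rwa [mirror_left] at h

@[simp]
lemma gd_mirror_mirror (p q x y : Sph n) : gd (mirror p q x) (mirror p q y) = gd x y :=
  congrArg Real.arccos ((ℝ ∙ ((p : Esp n) - q))ᗮ.reflection.inner_map_map x y)

lemma gd_mirror_left (p q x y : Sph n) : gd (mirror p q x) y = gd x (mirror p q y) := by
  simpa using gd_mirror_mirror p q x (mirror p q y)

lemma mirror_eq_self {p q x : Sph n} (h : gd x p = gd x q) : mirror p q x = x := by
  ext1
  refine Submodule.reflection_mem_subspace_eq_self
    (Submodule.mem_orthogonal_singleton_iff_inner_left.mpr ?_)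
  rw [inner_sub_right, ← cos_gd, ← cos_gd, h, sub_self]

lemma coe_mirror (p q x : Sph n) :
    (mirror p q x : Esp n) = x -
      (2 * inner ℝ (x : Esp n) ((p : Esp n) - q) / ‖(p : Esp n) - q‖ ^ 2) • ((p : Esp n) - q) := by
  change (ℝ ∙ ((p : Esp n) - q))ᗮ.reflection x = _
  rw [Submodule.reflection_orthogonal_apply, Submodule.reflection_singleton_apply,
    real_inner_comm (x : Esp n), RCLike.ofReal_real_eq_id, id]
  module

lemma inner_mirror_right (p q x y : Sph n) :
    inner ℝ (x : Esp n) (mirror p q y) = inner ℝ (x : Esp n) y -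
      2 * (inner ℝ (x : Esp n) ((p : Esp n) - q) * inner ℝ (y : Esp n) ((p : Esp n) - q)) /
        ‖(p : Esp n) - q‖ ^ 2 := by
  rw [coe_mirror, inner_sub_right (x : Esp n), inner_smul_right]
  ring

lemma gd_le_gd_mirror {p q x y : Sph n} (hx : gd x p ≤ gd x q) (hy : gd y p ≤ gd y q) :
    gd x y ≤ gd x (mirror p q y) := by
  rw [gd_le_gd_iff, ← sub_nonneg, ← inner_sub_right] at hx hy
  rw [gd_le_gd_iff, inner_mirror_right]
  have := mul_nonneg hx hy
  exact sub_le_self _ (by positivity)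

lemma gd_mirror_lt {p q x e : Sph n} (hx : gd x q < gd x p) (he : gd e p < gd e q) :
    gd (mirror p q x) e < gd x e := by
  have hpq : (p : Esp n) - q ≠ 0 := by
    rw [sub_ne_zero, Subtype.coe_ne_coe]
    rintro rfl
    exact hx.false
  rw [gd_lt_gd_iff, ← sub_pos, ← inner_sub_right] at he
  rw [gd_lt_gd_iff, ← sub_neg, ← inner_sub_right] at hx
  rw [gd_mirror_left, gd_lt_gd_iff, inner_mirror_right, lt_sub_comm, sub_self]
  have := mul_neg_of_neg_of_pos hx he
  exact div_neg_of_neg_of_pos (by linarith) (by positivity)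

lemma continuousAt_mirror {p x : Sph n} (hpx : p ≠ x) (q : Sph n) :
    ContinuousAt (fun y => mirror p y q) x := by
  have hne : ‖(p : Esp n) - x‖ ^ 2 ≠ 0 :=
    pow_ne_zero 2 (norm_ne_zero_iff.mpr (sub_ne_zero.mpr (Subtype.coe_ne_coe.mpr hpx)))
  rw [IsInducing.subtypeVal.continuousAt_iff]
  simp only [Function.comp_def, coe_mirror]
  fun_prop (disch := exact hne)

lemma not_collinear_sphere {p q y : Sph n} (hpq : p ≠ q) (hpy : p ≠ y) (hqy : q ≠ y) :
    ¬ Collinear ℝ {(p : Esp n), (q : Esp n), (y : Esp n)} := by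
  rw [← affineIndependent_iff_not_collinear_set]
  have hsphere : EuclideanGeometry.Cospherical (Metric.sphere (0 : Esp n) 1) :=
    ⟨0, 1, fun _ hv => hv⟩
  exact hsphere.affineIndependent_of_mem_of_ne p.2 q.2 y.2 (Subtype.coe_ne_coe.mpr hpq)
    (Subtype.coe_ne_coe.mpr hpy) (Subtype.coe_ne_coe.mpr hqy)

lemma add_eq_add_mirror {p q y : Sph n} (hpq : p ≠ q) (hpy : p ≠ y) (hqy : q ≠ y)
    (h : mirror p y q = mirror q y p) : (p : Esp n) + q = y + mirror p y q := by
  have hcoe : (mirror p y q : Esp n) = mirror q y p := congrArg _ h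
  rw [coe_mirror, coe_mirror] at hcoe
  rw [coe_mirror]
  generalize 2 * inner ℝ (q : Esp n) ((p : Esp n) - y) / ‖(p : Esp n) - y‖ ^ 2 = α at *
  generalize 2 * inner ℝ (p : Esp n) ((q : Esp n) - y) / ‖(q : Esp n) - y‖ ^ 2 = β at *
  have hlin : (1 + α) • ((p : Esp n) - y) = (1 + β) • ((q : Esp n) - y) := by
    linear_combination (norm := module) -hcoe
  suffices hα : 1 + α = 0 by
    rw [eq_neg_of_add_eq_zero_right hα]
    module
  by_contra hα
  refine not_collinear_sphere hpq hpy hqy ((collinear_iff_of_mem (p₀ := (y : Esp n)) (by simp)).mpr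
    ⟨(q : Esp n) - y, ?_⟩)
  rintro _ (rfl | rfl | rfl)
  · refine ⟨(1 + α)⁻¹ * (1 + β), ?_⟩
    rw [mul_smul, ← hlin, inv_smul_smul₀ hα, vadd_eq_add, sub_add_cancel]
  · exact ⟨1, by simp⟩
  · exact ⟨0, by simp⟩

end Mirror

section Measures

lemma subset_of_measure_union_le {α : Type*} [TopologicalSpace α] [MeasurableSpace α]
    [OpensMeasurableSpace α] {μ : Measure α} [μ.IsOpenPosMeasure] {L U : Set α}
    (hU : IsOpen U) (hL : IsClosed L) (hfin : μ L ≠ ⊤) (h : μ (L ∪ U) ≤ μ L) : U ⊆ L := by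
  rw [← measure_add_sdiff hL.nullMeasurableSet] at h
  have hnull : μ (U \ L) = 0 := by
    simpa using ENNReal.le_of_add_le_add_left hfin (h.trans_eq (add_zero _).symm)
  exact sdiff_eq_empty.mp ((hU.sdiff hL).measure_eq_zero_iff μ |>.mp hnull)

lemma exists_mem_Ioo_measure_level_eq_zero {α : Type*} [MeasurableSpace α] {μ : Measure α}
    [SFinite μ] {f : α → ℝ} (hf : Measurable f) {a b : ℝ} (hab : a < b) :
    ∃ t ∈ Ioo a b, μ {x | f x = t} = 0 := by
  obtain ⟨t, ht, hab⟩ :=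
    ((Measure.countable_meas_level_set_pos (μ := μ) hf).dense_compl ℝ).exists_between hab
  exact ⟨t, hab, by simpa using ht⟩

open TopologicalSpace in
lemma upperSemicontinuous_measure_compacts {α : Type*} [TopologicalSpace α] [MeasurableSpace α]
    (μ : Measure α) [μ.OuterRegular] : UpperSemicontinuous fun K : Compacts α => μ K := by
  intro K v hv
  obtain ⟨U, hKU, hU, hUv⟩ := (K : Set α).exists_isOpen_lt_of_lt v hv
  filter_upwards [(Compacts.isOpen_subsets_of_isOpen hU).mem_nhds hKU] with K' hK'
  exact (measure_mono hK').trans_lt hUv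

lemma exists_subset_mem_iff_measure_inter_pos {α : Type*} [TopologicalSpace α]
    [HereditarilyLindelofSpace α] [MeasurableSpace α] [BorelSpace α] (μ : Measure α) {A : Set α}
    (hA : IsClosed A) :
    ∃ K ⊆ A, IsClosed K ∧ μ A ≤ μ K ∧ ∀ x, x ∈ K ↔ ∀ U ∈ 𝓝 x, 0 < μ (U ∩ A) := by
  refine ⟨(μ.restrict A).support, Measure.support_subset_of_isClosed hA
    (ae_restrict_mem hA.measurableSet), Measure.isClosed_support, ?_, fun x => ?_⟩
  · calc μ A = μ.restrict A (μ.restrict A).support := by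
          rw [measure_of_measure_compl_eq_zero Measure.measure_compl_support,
            Measure.restrict_apply_univ]
      _ ≤ μ (μ.restrict A).support := Measure.restrict_apply_le A _
  · simp only [Measure.mem_support_iff_forall, Measure.restrict_apply' hA.measurableSet]

section Lipschitz
variable {E Y : Type*} [NormedAddCommGroup E] [NormedSpace ℝ E] [FiniteDimensional ℝ E]
  [MeasurableSpace E] [BorelSpace E] [EMetricSpace Y] [MeasurableSpace Y] [BorelSpace Y]
  {K : NNReal}

lemma finiteAtFilter_hausdorffMeasure_of_lipschitzOnWith {f : E → Y} {a : E} {s : Set E}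
    (hs : s ∈ 𝓝 a) (hf : LipschitzOnWith K f s) (hmap : 𝓝 (f a) ≤ map f (𝓝 a)) :
    (μH[Module.finrank ℝ E] : Measure Y).FiniteAtFilter (𝓝 (f a)) := by
  obtain ⟨t, ht, htfin⟩ := (μH[Module.finrank ℝ E] : Measure E).finiteAt_nhds a
  refine ⟨f '' (s ∩ t), hmap (image_mem_map (inter_mem hs ht)), ?_⟩
  calc μH[Module.finrank ℝ E] (f '' (s ∩ t))
      ≤ (K : ENNReal) ^ (Module.finrank ℝ E : ℝ) * μH[Module.finrank ℝ E] (s ∩ t) :=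
        (hf.mono inter_subset_left).hausdorffMeasure_image_le (Nat.cast_nonneg _)
    _ < ⊤ := ENNReal.mul_lt_top
        (ENNReal.rpow_lt_top_of_nonneg (Nat.cast_nonneg _) ENNReal.coe_ne_top)
        ((measure_mono inter_subset_right).trans_lt htfin)

lemma hausdorffMeasure_ne_zero_of_lipschitzOnWith {f : Y → E} {y : Y} {s U : Set Y}
    (hs : s ∈ 𝓝 y) (hf : LipschitzOnWith K f s) (hmap : 𝓝 (f y) ≤ map f (𝓝 y)) (hU : U ∈ 𝓝 y) :
    μH[Module.finrank ℝ E] U ≠ 0 := by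
  intro hzero
  have himage : 0 < μH[Module.finrank ℝ E] (f '' (s ∩ U)) :=
    Measure.measure_pos_of_mem_nhds _ (hmap (image_mem_map (inter_mem hs hU)))
  refine himage.not_ge ?_
  calc μH[Module.finrank ℝ E] (f '' (s ∩ U))
      ≤ (K : ENNReal) ^ (Module.finrank ℝ E : ℝ) * μH[Module.finrank ℝ E] (s ∩ U) :=
        (hf.mono inter_subset_left).hausdorffMeasure_image_le (Nat.cast_nonneg _)
    _ = 0 := by rw [measure_mono_null inter_subset_right hzero, mul_zero]

end Lipschitz

end Measures

section SphericalVolume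
variable {n : ℕ}

lemma finrank_orthogonal_span_sphere (x : Sph n) :
    Module.finrank ℝ (ℝ ∙ (x : Esp n))ᗮ = n :=
  have : Fact (Module.finrank ℝ (Esp n) = n + 1) := ⟨finrank_euclideanSpace_fin⟩
  Submodule.finrank_orthogonal_span_singleton (ne_zero_of_mem_unit_sphere x)

lemma mem_stereographic_source_neg (x : Sph n) :
    x ∈ (stereographic (norm_eq_of_mem_sphere (-x))).source := by
  rw [stereographic_source]
  exact ne_neg_of_mem_unit_sphere ℝ x

instance : IsFiniteMeasure (sphVol n) := by
  have : IsLocallyFiniteMeasure (sphVol n) := ⟨fun x => by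
    have hx := mem_stereographic_source_neg x
    set e := stereographic (norm_eq_of_mem_sphere (-x))
    obtain ⟨K, s, hs, hK⟩ :=
      (contDiff_stereoInvFunAux.comp (ℝ ∙ ((-x : Sph n) : Esp n))ᗮ.subtypeL.contDiff).contDiffAt
        (x := e x) |>.exists_lipschitzOnWith
    have hfin := finiteAtFilter_hausdorffMeasure_of_lipschitzOnWith (f := e.symm) hs
      (fun _ ha _ hb => hK ha hb) (e.symm.map_nhds_eq (e.map_source hx)).ge
    rwa [finrank_orthogonal_span_sphere, e.left_inv hx] at hfin⟩
  exact ⟨isCompact_univ.measure_lt_top⟩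

instance : (sphVol n).IsOpenPosMeasure := by
  refine ⟨fun U hU ⟨x, hxU⟩ => ?_⟩
  have hx := mem_stereographic_source_neg x
  set e := stereographic (norm_eq_of_mem_sphere (-x))
  obtain ⟨K, s, hs, hK⟩ : ∃ K, ∃ s ∈ 𝓝 (x : Esp n),
      LipschitzOnWith K (stereoToFun ((-x : Sph n) : Esp n)) s := by
    have hinner : innerSL ℝ ((-x : Sph n) : Esp n) x ≠ 1 := by simp; norm_num
    exact (contDiffOn_stereoToFun.contDiffAt
      ((isOpen_ne_fun (by fun_prop) continuous_const).mem_nhds hinner)).exists_lipschitzOnWith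
  have hpos := hausdorffMeasure_ne_zero_of_lipschitzOnWith (f := e)
    (continuous_subtype_val.continuousAt.preimage_mem_nhds hs)
    (fun _ ha _ hb => hK ha hb) (e.map_nhds_eq hx).ge (hU.mem_nhds hxU)
  rwa [finrank_orthogonal_span_sphere] at hpos

lemma sphVol_mirror_preimage (p q : Sph n) (s : Set (Sph n)) :
    sphVol n (mirror p q ⁻¹' s) = sphVol n s :=
  (mirror p q).hausdorffMeasure_preimage _ s

lemma sphVol_neg_preimage (s : Set (Sph n)) : sphVol n (Neg.neg ⁻¹' s) = sphVol n s := by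
  have hneg : Isometry (Neg.neg : Sph n → Sph n) := fun x y => edist_neg_neg (x : Esp n) y
  rw [sphVol, hneg.hausdorffMeasure_preimage (Or.inr neg_surjective), neg_surjective.range_eq,
    inter_univ]

lemma sphVol_sphBall_eq (z w : Sph n) (r : ℝ) :
    sphVol n (sphBall z r) = sphVol n (sphBall w r) := by
  rw [← sphVol_mirror_preimage z w (sphBall w r)]
  congr 1
  ext x
  simp only [sphBall, mem_preimage, mem_ofPred_eq, gd_mirror_left, mirror_right]

lemma sphVol_sphBall_strictMonoOn [NeZero n] (z : Sph n) :
    StrictMonoOn (fun r => sphVol n (sphBall z r)) (Icc 0 Real.pi) := by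
  intro r hr s hs hrs
  by_contra! hle
  obtain ⟨x, hx⟩ := exists_gd_eq z (r := (r + s) / 2) (by linarith [hr.1]) (by linarith [hs.2])
  have hsub : {x | gd x z < s} ⊆ sphBall z r := by
    refine subset_of_measure_union_le (μ := sphVol n) (isOpen_lt (by fun_prop) continuous_const)
      (isClosed_sphBall z r) (measure_ne_top _ _) ((measure_mono ?_).trans hle)
    exact union_subset (fun y hy => le_trans (α := ℝ) hy hrs.le) (fun y hy => le_of_lt (α := ℝ) hy)
  have hxr : gd x z ≤ r := hsub (show gd x z < s by linarith)
  linarith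

end SphericalVolume

section Polarization
variable {n : ℕ}

/-- The polarization (two-point symmetrization) of `A` towards `p`, with respect to the mirror that
exchanges `p` and `q`: a point of `A` on the side of `q` is replaced by its mirror image, unless
both belong to `A`. -/
def pol (p q : Sph n) (A : Set (Sph n)) : Set (Sph n) :=
  ((A ∪ mirror p q ⁻¹' A) ∩ {x | gd x p ≤ gd x q}) ∪ (A ∩ mirror p q ⁻¹' A)

/-- The part of `A` that is not contained in `pol p q A`. -/
def moved (p q : Sph n) (A : Set (Sph n)) : Set (Sph n) :=
  A ∩ {x | gd x q < gd x p} ∩ (mirror p q ⁻¹' A)ᶜ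

/-- All distances between points of `A` and points of `B` are at most `D`. -/
def GdLE (D : ℝ) (A B : Set (Sph n)) : Prop := ∀ x ∈ A, ∀ y ∈ B, gd x y ≤ D

lemma GdLE.mono {D : ℝ} {A A' B B' : Set (Sph n)} (h : GdLE D A B) (hA : A' ⊆ A) (hB : B' ⊆ B) :
    GdLE D A' B' := fun x hx y hy => h x (hA hx) y (hB hy)

lemma GdLE.symm {D : ℝ} {A B : Set (Sph n)} (h : GdLE D A B) : GdLE D B A :=
  fun x hx y hy => gd_comm y x ▸ h y hy x hx

protected lemma GdLE.closure {D : ℝ} {A B : Set (Sph n)} (h : GdLE D A B) :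
    GdLE D (closure A) (closure B) := fun x hx y hy =>
  closure_minimal (s := Iic D) Subset.rfl isClosed_Iic
    (map_mem_closure₂ (f := gd) (by fun_prop) hx hy h)

lemma isClosed_pol (p q : Sph n) {A : Set (Sph n)} (hA : IsClosed A) : IsClosed (pol p q A) := by
  have hρ := hA.preimage (mirror p q).continuous
  exact ((hA.union hρ).inter (isClosed_le (by fun_prop) (by fun_prop))).union (hA.inter hρ)

lemma measurableSet_moved (p q : Sph n) {A : Set (Sph n)} (hA : MeasurableSet A) :
    MeasurableSet (moved p q A) := by
  have hside : IsOpen {x : Sph n | gd x q < gd x p} := isOpen_lt (by fun_prop) (by fun_prop)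
  exact (hA.inter hside.measurableSet).inter ((mirror p q).continuous.measurable hA).compl

lemma pol_eq_sdiff_union_preimage (p q : Sph n) (A : Set (Sph n)) :
    pol p q A = (A \ moved p q A) ∪ mirror p q ⁻¹' moved p q A := by
  ext x
  have hfix : gd x p = gd x q → (mirror p q x ∈ A ↔ x ∈ A) := fun h => by rw [mirror_eq_self h]
  simp only [pol, moved, mem_union, mem_inter_iff, mem_preimage, Set.mem_sdiff, mem_compl_iff,
    mem_ofPred_eq, mirror_mirror, gd_mirror_left, mirror_left, mirror_right]
  rcases lt_trichotomy (gd x p) (gd x q) with h | h | h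
  · simp only [h, h.le, h.not_gt, and_true]
    tauto
  · simp only [h, hfix h, lt_irrefl, le_refl]
    tauto
  · simp only [h, h.not_ge, h.not_gt, and_false]
    tauto

lemma disjoint_sdiff_moved_preimage (p q : Sph n) (A : Set (Sph n)) :
    Disjoint (A \ moved p q A) (mirror p q ⁻¹' moved p q A) := by
  rw [Set.disjoint_left]
  rintro x ⟨hxA, -⟩ ⟨-, hx⟩
  exact hx (by rwa [mem_preimage, mirror_mirror])

lemma measure_pol_add_measure_moved (μ : Measure (Sph n)) (p q : Sph n) {A : Set (Sph n)}
    (hA : MeasurableSet A) :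
    μ (pol p q A) + μ (moved p q A) = μ A + μ (mirror p q ⁻¹' moved p q A) := by
  have hmoved := measurableSet_moved p q hA
  have hsub : moved p q A ⊆ A := fun _ hx => hx.1.1
  rw [pol_eq_sdiff_union_preimage, measure_union (disjoint_sdiff_moved_preimage p q A)
    ((mirror p q).continuous.measurable hmoved), add_right_comm, add_comm (μ (A \ _)),
    measure_add_sdiff hmoved.nullMeasurableSet, union_eq_self_of_subset_left hsub]

lemma sphVol_pol (p q : Sph n) {A : Set (Sph n)} (hA : MeasurableSet A) :
    sphVol n (pol p q A) = sphVol n A := by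
  have h := measure_pol_add_measure_moved (sphVol n) p q hA
  rw [sphVol_mirror_preimage] at h
  exact (ENNReal.add_left_inj (measure_ne_top _ _)).mp h

protected lemma GdLE.pol {D : ℝ} {A B : Set (Sph n)} (h : GdLE D A B) (p q : Sph n) :
    GdLE D (pol p q A) (pol p q B) := by
  have hboth (x y : Sph n) := gd_mirror_mirror p q x y
  have hleft (x y : Sph n) := gd_mirror_left p q x y
  rintro x (⟨hx | hx, hxp⟩ | ⟨hx, hρx⟩) y (⟨hy | hy, hyp⟩ | ⟨hy, hρy⟩)
  · exact h x hx y hy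
  · exact (gd_le_gd_mirror hxp hyp).trans (h x hx _ hy)
  · exact h x hx y hy
  · exact (gd_le_gd_mirror hxp hyp).trans (hleft x y ▸ h _ hx y hy)
  · exact hboth x y ▸ h _ hx _ hy
  · exact hboth x y ▸ h _ hx _ hρy
  · exact h x hx y hy
  · exact hboth x y ▸ h _ hρx _ hy
  · exact h x hx y hy

/-- Spherical volume weighted with a density that increases towards `e`. -/
def radialMeasure (e : Sph n) : Measure (Sph n) :=
  (sphVol n).withDensity fun x => ENNReal.ofReal (Real.pi - gd x e)

instance (e : Sph n) : IsFiniteMeasure (radialMeasure e) := by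
  refine isFiniteMeasure_withDensity (ne_top_of_le_ne_top
    (b := ∫⁻ _, ENNReal.ofReal Real.pi ∂(sphVol n)) ?_ (lintegral_mono fun x => ?_))
  · rw [lintegral_const]
    exact ENNReal.mul_ne_top ENNReal.ofReal_ne_top (measure_ne_top _ _)
  · exact ENNReal.ofReal_le_ofReal (by linarith [gd_nonneg x e])

lemma radialMeasure_mirror_preimage (e p q : Sph n) {A : Set (Sph n)} (hA : MeasurableSet A) :
    radialMeasure e (mirror p q ⁻¹' A) =
      ∫⁻ x in A, ENNReal.ofReal (Real.pi - gd (mirror p q x) e) ∂(sphVol n) := by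
  have hρ : MeasurePreserving (mirror p q) (sphVol n) (sphVol n) :=
    (mirror p q).measurePreserving_hausdorffMeasure _
  rw [radialMeasure, withDensity_apply _ (hρ.measurable hA),
    ← hρ.setLIntegral_comp_preimage_emb (mirror p q).toHomeomorph.measurableEmbedding]
  congr 2
  exact preimage_preimage.trans (by simp)

lemma radialMeasure_lt_mirror_preimage {e p q : Sph n} (he : gd e p < gd e q) {A : Set (Sph n)}
    (hA : MeasurableSet A) (hside : ∀ x ∈ A, gd x q < gd x p) (hpos : sphVol n A ≠ 0) :
    radialMeasure e A < radialMeasure e (mirror p q ⁻¹' A) := by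
  rw [radialMeasure_mirror_preimage e p q hA, radialMeasure, withDensity_apply _ hA]
  refine setLIntegral_strict_mono hA hpos (by fun_prop) ?_ (ae_of_all _ fun x hx => ?_)
  · rw [← withDensity_apply _ hA]
    exact measure_ne_top (radialMeasure e) A
  · have hlt : gd (mirror p q x) e < gd x e := gd_mirror_lt (hside x hx) he
    exact (ENNReal.ofReal_lt_ofReal_iff (by linarith [gd_le_pi x e])).mpr (by linarith)

lemma radialMeasure_le_pol {e p q : Sph n} (he : gd e p < gd e q) {A : Set (Sph n)}
    (hA : MeasurableSet A) : radialMeasure e A ≤ radialMeasure e (pol p q A) := by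
  have hmoved := measurableSet_moved p q hA
  have hle : radialMeasure e (moved p q A) ≤ radialMeasure e (mirror p q ⁻¹' moved p q A) := by
    rcases eq_or_ne (sphVol n (moved p q A)) 0 with h0 | hpos
    · exact (withDensity_absolutelyContinuous _ _ h0).trans_le zero_le
    · exact (radialMeasure_lt_mirror_preimage he hmoved (fun _ hx => hx.1.2) hpos).le
  refine ENNReal.le_of_add_le_add_right (measure_ne_top (radialMeasure e) (moved p q A)) ?_
  rw [measure_pol_add_measure_moved _ p q hA]
  gcongr

lemma sphVol_moved_eq_zero {e p q : Sph n} (he : gd e p < gd e q) {A : Set (Sph n)}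
    (hA : MeasurableSet A) (hle : radialMeasure e (pol p q A) ≤ radialMeasure e A) :
    sphVol n (moved p q A) = 0 := by
  by_contra hpos
  refine (radialMeasure_lt_mirror_preimage he (measurableSet_moved p q hA) (fun _ hx => hx.1.2)
    hpos).not_ge (ENNReal.le_of_add_le_add_left (measure_ne_top (radialMeasure e) A) ?_)
  rw [← measure_pol_add_measure_moved _ p q hA]
  gcongr

end Polarization

section Maximization
open TopologicalSpace
variable {n : ℕ}

lemma isClosed_setOf_gdLE (D : ℝ) :
    IsClosed {P : Compacts (Sph n) × Compacts (Sph n) | GdLE D (P.1 : Set (Sph n)) P.2} := by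
  have hnear : IsClosed {P : Sph n × Sph n | gd P.1 P.2 ≤ D} :=
    isClosed_le (by fun_prop) (by fun_prop)
  simpa only [preimage_ofPred_eq, Compacts.coe_prod, prod_subset_iff, mem_ofPred_eq, GdLE] using
    (Compacts.isClosed_subsets_of_isClosed hnear).preimage Compacts.continuous_prod

lemma exists_isMaxOn_radialMeasure (e : Sph n) {D : ℝ} {A B : Set (Sph n)} (hA : IsClosed A)
    (hB : IsClosed B) (h : GdLE D A B) :
    let S := {P : Compacts (Sph n) × Compacts (Sph n) | GdLE D (P.1 : Set (Sph n)) P.2 ∧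
      sphVol n A ≤ sphVol n P.1 ∧ sphVol n B ≤ sphVol n P.2}
    ∃ P ∈ S, IsMaxOn (fun P => radialMeasure e P.1 + radialMeasure e P.2) S P := by
  intro S
  have hfst (μ : Measure (Sph n)) [IsFiniteMeasure μ] : UpperSemicontinuous
      fun P : Compacts (Sph n) × Compacts (Sph n) => μ P.1 :=
    (upperSemicontinuous_measure_compacts μ).comp continuous_fst
  have hsnd (μ : Measure (Sph n)) [IsFiniteMeasure μ] : UpperSemicontinuous
      fun P : Compacts (Sph n) × Compacts (Sph n) => μ P.2 :=
    (upperSemicontinuous_measure_compacts μ).comp continuous_snd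
  have hS : IsClosed S := (isClosed_setOf_gdLE D).inter
    (((hfst _).isClosed_preimage _).inter ((hsnd _).isClosed_preimage _))
  exact (((hfst _).add (hsnd _)).upperSemicontinuousOn S).exists_isMaxOn
    ⟨(⟨A, hA.isCompact⟩, ⟨B, hB.isCompact⟩), h, le_rfl, le_rfl⟩ hS.isCompact

/-- `A` is stable, up to a null set, under every polarization towards a point nearer to `e`. -/
def PolStable (e : Sph n) (A : Set (Sph n)) : Prop :=
  ∀ p q, gd e p < gd e q → sphVol n (moved p q A) = 0

lemma GdLE.exists_polStable {D : ℝ} {A B : Set (Sph n)} (h : GdLE D A B) (hA : IsClosed A)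
    (hB : IsClosed B) (e : Sph n) :
    ∃ A' B', IsClosed A' ∧ IsClosed B' ∧ GdLE D A' B' ∧ sphVol n A ≤ sphVol n A' ∧
      sphVol n B ≤ sphVol n B' ∧ PolStable e A' ∧ PolStable e B' := by
  obtain ⟨⟨A', B'⟩, ⟨h', hvA, hvB⟩, hmax⟩ := exists_isMaxOn_radialMeasure e hA hB h
  have hA' := A'.isCompact.isClosed
  have hB' := B'.isCompact.isClosed
  have hsum (p q : Sph n) : radialMeasure e (pol p q A') + radialMeasure e (pol p q B') ≤
      radialMeasure e A' + radialMeasure e B' :=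
    hmax (a := (⟨pol p q A', (isClosed_pol p q hA').isCompact⟩,
      ⟨pol p q B', (isClosed_pol p q hB').isCompact⟩))
      ⟨h'.pol p q, hvA.trans_eq (sphVol_pol p q hA'.measurableSet).symm,
        hvB.trans_eq (sphVol_pol p q hB'.measurableSet).symm⟩
  refine ⟨A', B', hA', hB', h', hvA, hvB, fun p q he => ?_, fun p q he => ?_⟩
  · refine sphVol_moved_eq_zero he hA'.measurableSet (ENNReal.le_of_add_le_add_right
      (measure_ne_top (radialMeasure e) B') (.trans ?_ (hsum p q)))
    exact add_le_add_right (radialMeasure_le_pol he hB'.measurableSet) _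
  · refine sphVol_moved_eq_zero he hB'.measurableSet (ENNReal.le_of_add_le_add_left
      (measure_ne_top (radialMeasure e) A') (.trans ?_ (hsum p q)))
    exact add_le_add_left (radialMeasure_le_pol he hA'.measurableSet) _

end Maximization

section PairInequality
variable {n : ℕ}

lemma PolStable.measure_inter_pos {e x y : Sph n} {A : Set (Sph n)} (hA : PolStable e A)
    (hxy : gd y e < gd x e) (hx : ∀ U ∈ 𝓝 x, 0 < sphVol n (U ∩ A)) {U : Set (Sph n)}
    (hU : U ∈ 𝓝 y) : 0 < sphVol n (U ∩ A) := by
  have hside : {z | gd z x < gd z y} ∈ 𝓝 x := by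
    refine (isOpen_lt (by fun_prop) (by fun_prop)).mem_nhds ?_
    rw [mem_ofPred_eq, gd_self, gd_pos_iff]
    rintro rfl
    exact hxy.false
  have hpre : mirror y x ⁻¹' U ∈ 𝓝 x :=
    (mirror y x).continuous.continuousAt.preimage_mem_nhds (by rwa [mirror_right])
  have hsub : mirror y x ⁻¹' U ∩ {z | gd z x < gd z y} ∩ A ⊆
      mirror y x ⁻¹' (U ∩ A) ∪ moved y x A := by
    rintro z ⟨⟨hzU, hz⟩, hzA⟩
    exact (em (mirror y x z ∈ A)).imp (fun h => ⟨hzU, h⟩) (fun h => ⟨⟨hzA, hz⟩, h⟩)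
  calc 0 < sphVol n (mirror y x ⁻¹' U ∩ {z | gd z x < gd z y} ∩ A) := hx _ (inter_mem hpre hside)
    _ ≤ sphVol n (mirror y x ⁻¹' (U ∩ A)) + sphVol n (moved y x A) :=
      (measure_mono hsub).trans (measure_union_le _ _)
    _ = sphVol n (U ∩ A) := by
      rw [sphVol_mirror_preimage, hA y x (by rwa [gd_comm e, gd_comm e]), add_zero]

lemma exists_eq_sphBall_of_forall_gd_lt [NeZero n] {e : Sph n} {K : Set (Sph n)} (hK : IsClosed K)
    (hne : K.Nonempty) (hrad : ∀ x ∈ K, ∀ y, gd y e < gd x e → y ∈ K) :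
    ∃ t ∈ Icc 0 Real.pi, K = sphBall e t := by
  obtain ⟨x, hx, hmax⟩ :=
    hK.isCompact.exists_isMaxOn hne (f := fun x => gd x e) (by fun_prop)
  refine ⟨gd x e, gd_mem_Icc x e, Subset.antisymm (fun y hy => hmax hy) ?_⟩
  rcases (gd_nonneg x e).eq_or_lt with h0 | hpos
  · intro y hy
    have hye : y = e := gd_eq_zero_iff.mp (le_antisymm (h0 ▸ hy) (gd_nonneg y e))
    exact hye ▸ gd_eq_zero_iff.mp h0.symm ▸ hx
  · rw [← closure_setOf_gd_lt e hpos]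
    exact closure_minimal (fun y hy => hrad x hx y hy) hK

lemma PolStable.exists_sphBall_subset [NeZero n] {e : Sph n} {A : Set (Sph n)}
    (hstable : PolStable e A) (hA : IsClosed A) (hpos : sphVol n A ≠ 0) :
    ∃ t ∈ Icc 0 Real.pi, sphBall e t ⊆ A ∧ sphVol n A ≤ sphVol n (sphBall e t) := by
  obtain ⟨K, hKA, hK, hvol, hmem⟩ := exists_subset_mem_iff_measure_inter_pos (sphVol n) hA
  have hne : K.Nonempty := nonempty_of_measure_ne_zero (ne_bot_of_le_ne_bot hpos hvol)
  obtain ⟨t, ht, rfl⟩ := exists_eq_sphBall_of_forall_gd_lt hK hne fun x hx y hxy =>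
    (hmem y).mpr fun U hU => hstable.measure_inter_pos hxy ((hmem x).mp hx) hU
  exact ⟨t, ht, hKA, hvol⟩

lemma GdLE.add_le_of_sphBall [NeZero n] {e : Sph n} {D a b : ℝ} (hD : D < Real.pi)
    (ha : a ∈ Icc 0 Real.pi) (hb : b ∈ Icc 0 Real.pi)
    (h : GdLE D (sphBall e a) (sphBall e b)) : a + b ≤ D := by
  obtain ⟨g, -, hg0, -, hg⟩ := exists_unit_speed_geodesic e e
  have hball {s t : ℝ} (hs : |s| ≤ t) (ht : t ≤ Real.pi) : g s ∈ sphBall e t := by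
    have := hg s 0 (by simpa using hs.trans ht)
    rw [hg0, sub_zero] at this
    exact this.trans_le hs
  set c := min b (Real.pi - a) with hc
  have hc0 : 0 ≤ c := le_min hb.1 (by linarith [ha.2])
  have hcπ : a + c ≤ Real.pi := by linarith [min_le_right b (Real.pi - a)]
  have hcb : |-c| ≤ b := by rw [abs_neg, abs_of_nonneg hc0]; exact min_le_left _ _
  have hac : |a - -c| = a + c := by rw [sub_neg_eq_add, abs_of_nonneg (by linarith [ha.1])]
  have hle := h _ (hball (abs_of_nonneg ha.1).le ha.2) _ (hball hcb hb.2)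
  rw [hg _ _ (by rwa [hac]), hac] at hle
  rcases min_choice b (Real.pi - a) with hmin | hmin <;> rw [hmin] at hc <;> linarith

lemma GdLE.sphVol_le [NeZero n] {A B : Set (Sph n)} {D r : ℝ} (h : GdLE D A B) (hA : IsClosed A)
    (hB : IsClosed B) (hr : 0 < r) (hrπ : r ≤ Real.pi) (hD : D < Real.pi) (e : Sph n)
    (hvol : sphVol n (sphBall e r) ≤ sphVol n A) :
    sphVol n B ≤ sphVol n (sphBall e (D - r)) := by
  have hmono := sphVol_sphBall_strictMonoOn e
  rcases eq_or_ne (sphVol n B) 0 with hB0 | hB0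
  · exact hB0.trans_le zero_le
  have hA0 : 0 < sphVol n A :=
    ((hmono (left_mem_Icc.mpr Real.pi_pos.le) ⟨hr.le, hrπ⟩ hr).trans_le hvol).pos
  obtain ⟨A', B', hA', hB', h', hvA, hvB, hsA, hsB⟩ := h.exists_polStable hA hB e
  obtain ⟨a, ha, haA, hvolA⟩ := hsA.exists_sphBall_subset hA' (hA0.trans_le hvA).ne'
  obtain ⟨b, hb, hbB, hvolB⟩ := hsB.exists_sphBall_subset hB' (ne_bot_of_le_ne_bot hB0 hvB)
  have hab : a + b ≤ D := (h'.mono haA hbB).add_le_of_sphBall hD ha hb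
  have hra : r ≤ a := (hmono.le_iff_le ⟨hr.le, hrπ⟩ ha).mp ((hvol.trans hvA).trans hvolA)
  exact (hvB.trans hvolB).trans (measure_mono fun x hx => le_trans (α := ℝ) hx (by linarith))

end PairInequality

section Rigidity

lemma subset_interior_of_disjoint_frontier {α : Type*} [TopologicalSpace α] {s t : Set α}
    (hs : IsPreconnected s) (hdisj : Disjoint s (frontier t)) (hne : (s ∩ t).Nonempty) :
    s ⊆ interior t := by
  obtain ⟨x, hxs, hxt⟩ := hne
  refine hs.subset_left_of_subset_union isOpen_interior isClosed_closure.isOpen_compl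
    (disjoint_compl_right_iff_subset.mpr interior_subset_closure) (fun y hy => ?_) ⟨x, hxs, ?_⟩
  · rw [mem_union, mem_compl_iff, ← imp_iff_or_not]
    exact fun hy' => by_contra fun hyt => hdisj.notMem_of_mem_left hy ⟨hy', hyt⟩
  · exact by_contra fun hxi => hdisj.notMem_of_mem_left hxs ⟨subset_closure hxt, hxi⟩

variable {n : ℕ}

/-- `L` has the largest volume among the closed subsets of the sphere whose points all have distance
at most `D` from each other and from the points of `L`. -/
structure IsExtremal (D : ℝ) (L : Set (Sph n)) : Prop where
  isClosed : IsClosed L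
  gdLE : GdLE D L L
  sphVol_le : ∀ M, IsClosed M → GdLE D M M → sphVol n M ≤ sphVol n L

/-- The points of `L` at distance `D` from `p`; below, `D` is the largest distance between points of
`L`. -/
def partners (D : ℝ) (L : Set (Sph n)) (p : Sph n) : Set (Sph n) := {q ∈ L | gd p q = D}

protected lemma IsExtremal.pol {D : ℝ} {L : Set (Sph n)} (hL : IsExtremal D L) (p q : Sph n) :
    IsExtremal D (pol p q L) where
  isClosed := isClosed_pol p q hL.isClosed
  gdLE := hL.gdLE.pol p q
  sphVol_le M hM hMD := (hL.sphVol_le M hM hMD).trans_eq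
    (sphVol_pol p q hL.isClosed.measurableSet).symm

lemma IsExtremal.mem_interior {D : ℝ} (hD : 0 < D) {L : Set (Sph n)} (hL : IsExtremal D L)
    {p : Sph n} (hp : ∀ q ∈ L, gd p q < D) : p ∈ interior L := by
  let B := {x | ∀ q ∈ L, gd x q ≤ D} ∩ sphBall p (D / 2)
  have hB : IsClosed B := by
    refine .inter ?_ (isClosed_sphBall p _)
    simp only [ofPred_forall]
    exact isClosed_biInter fun q _ => isClosed_le (by fun_prop) (by fun_prop)
  have hBp : B ∈ 𝓝 p := by
    refine inter_mem ?_ ?_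
    · refine hL.isClosed.isCompact.eventually_forall_of_forall_eventually fun q hq => ?_
      have hnear : IsOpen {z : Sph n × Sph n | gd z.1 z.2 < D} :=
        isOpen_lt (by fun_prop) (by fun_prop)
      filter_upwards [hnear.mem_nhds (hp q hq)] with z hz using hz.le
    · have hball : IsOpen {x | gd x p < D / 2} := isOpen_lt (by fun_prop) (by fun_prop)
      filter_upwards [hball.mem_nhds (by simpa [gd_self] using hD)] with x hx using hx.le
  have hLB : GdLE D (L ∪ B) (L ∪ B) := by
    rintro x (hx | hx) y (hy | hy)
    · exact hL.gdLE x hx y hy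
    · exact gd_comm x y ▸ hy.1 x hx
    · exact hx.1 y hy
    · have := gd_triangle x p y
      have hx' : gd x p ≤ D / 2 := hx.2
      have hy' : gd y p ≤ D / 2 := hy.2
      rw [gd_comm p y] at this
      linarith
  have hsub : interior B ⊆ L := by
    refine subset_of_measure_union_le isOpen_interior hL.isClosed (measure_ne_top (sphVol n) L) ?_
    exact (measure_mono (union_subset_union_right L interior_subset)).trans
      (hL.sphVol_le _ (hL.isClosed.union hB) hLB)
  exact interior_maximal hsub isOpen_interior (mem_interior_iff_mem_nhds.mpr hBp)

lemma GdLE.gd_lt_of_mem_interior [NeZero n] {D : ℝ} (hD : D < Real.pi) {A B : Set (Sph n)}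
    (h : GdLE D A B) {p q : Sph n} (hp : p ∈ interior A) (hq : q ∈ B) : gd p q < D := by
  refine (h p (interior_subset hp) q hq).lt_of_ne fun hpq => ?_
  obtain ⟨g, hg, hgq, hgp, hdist⟩ := exists_unit_speed_geodesic q p
  have hD0 : 0 ≤ D := hpq ▸ gd_nonneg p q
  rw [gd_comm, hpq] at hgp
  have hnear : ∀ᶠ t in 𝓝[>] D, g t ∈ A ∧ t < Real.pi := by
    refine nhdsWithin_le_nhds (inter_mem (hg.continuousAt.preimage_mem_nhds ?_) (Iio_mem_nhds hD))
    exact hgp ▸ mem_interior_iff_mem_nhds.mp hp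
  obtain ⟨t, ⟨htA, htπ⟩, hDt⟩ := (hnear.and self_mem_nhdsWithin).exists
  replace hDt : D < t := hDt
  have hle := h _ htA _ hq
  rw [← hgq, hdist t 0 (by rw [sub_zero, abs_of_nonneg (by linarith)]; exact htπ.le), sub_zero,
    abs_of_nonneg (by linarith)] at hle
  linarith

lemma IsExtremal.partners_nonempty {D : ℝ} (hD : 0 < D) {L : Set (Sph n)} (hL : IsExtremal D L)
    {p : Sph n} (hp : p ∈ frontier L) : (partners D L p).Nonempty := by
  rw [hL.isClosed.frontier_eq] at hp
  by_contra! hempty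
  refine hp.2 (hL.mem_interior hD fun q hq => (hL.gdLE p hp.1 q hq).lt_of_ne fun hpq => ?_)
  exact hempty.subset ⟨hq, hpq⟩

lemma IsExtremal.partners_subset_frontier [NeZero n] {D : ℝ} (hD : D < Real.pi) {L : Set (Sph n)}
    (hL : IsExtremal D L) {p : Sph n} (hp : p ∈ L) : partners D L p ⊆ frontier L := by
  rintro q ⟨hq, hpq⟩
  rw [hL.isClosed.frontier_eq]
  refine ⟨hq, fun hq' => (hL.gdLE.gd_lt_of_mem_interior hD hq' hp).ne ?_⟩
  rw [gd_comm, hpq]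

lemma mem_interior_of_mem_interior_pol {p q x : Sph n} {A : Set (Sph n)} (hA : IsClosed A)
    (hx : x ∈ interior (pol p q A)) (hρx : mirror p q x ∉ A) : x ∈ interior A := by
  rw [mem_interior_iff_mem_nhds] at hx ⊢
  have haway : ∀ᶠ y in 𝓝 x, mirror p q y ∉ A :=
    (mirror p q).continuous.continuousAt.eventually (hA.isOpen_compl.mem_nhds hρx)
  filter_upwards [hx, haway] with y hy hρy
  rcases hy with ⟨hy | hy, -⟩ | ⟨hy, -⟩
  exacts [hy, absurd hy hρy, hy]

/- The polarization of `L` towards `p` is extremal and still has `p` on its boundary, so `p` has a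
partner in it. That partner can only come from `q`. -/
lemma IsExtremal.mirror_mem_or {D : ℝ} (hD : 0 < D) {L : Set (Sph n)} (hL : IsExtremal D L)
    {p q x : Sph n} (hp : p ∈ frontier L) (hpq : partners D L p = {q}) (hx : x ∉ L) :
    mirror p x q ∈ L ∨ gd q p ≤ gd q x := by
  rw [hL.isClosed.frontier_eq] at hp
  have hM := hL.pol p x
  have hpM : p ∈ pol p x L := Or.inl ⟨Or.inl hp.1, by simp [gd_self, gd_nonneg]⟩
  have hfront : p ∈ frontier (pol p x L) := by
    rw [hM.isClosed.frontier_eq]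
    exact ⟨hpM, fun hint => hp.2 (mem_interior_of_mem_interior_pol hL.isClosed hint (by simpa))⟩
  have huniq {y} (hy : y ∈ L) (hpy : gd p y = D) : y = q := hpq.subset ⟨hy, hpy⟩
  obtain ⟨q', hq', hpq'⟩ := hM.partners_nonempty hD hfront
  rcases hq' with ⟨hq' | hρq', hside⟩ | ⟨hq', hρq'⟩
  · exact Or.inr (huniq hq' hpq' ▸ hside)
  · have hle := gd_le_gd_mirror (x := p) (by simp [gd_self, gd_nonneg]) hside
    have hρ : mirror p x q' = q := huniq hρq' ((hL.gdLE p hp.1 _ hρq').antisymm (hpq' ▸ hle))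
    have hqp : gd p q = D := (hpq.superset rfl).2
    have hqx : gd q x = D := by rw [← hρ, gd_mirror_left, mirror_right, gd_comm, hpq']
    rw [gd_comm, hqp, hqx]
    exact Or.inr le_rfl
  · exact Or.inl (huniq hq' hpq' ▸ hρq')

lemma IsExtremal.mirror_mem {D : ℝ} (hD : 0 < D) {L : Set (Sph n)} (hL : IsExtremal D L)
    {p q x : Sph n} (hp : p ∈ frontier L) (hpq : partners D L p = {q}) (hx : x ∈ frontier L)
    (hpx : p ≠ x) : mirror p x q ∈ L := by
  obtain ⟨hq, hqD⟩ : q ∈ partners D L p := hpq.superset rfl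
  rw [hL.isClosed.frontier_eq] at hx
  by_contra hρq
  have hlt : gd q x < gd q p := by
    refine (gd_comm p q ▸ hqD ▸ hL.gdLE q hq x hx.1).lt_of_ne fun h => hρq ?_
    rwa [mirror_eq_self h.symm]
  have hnear : ∀ᶠ y in 𝓝 x, mirror p y q ∉ L ∧ gd q y < gd q p :=
    ((continuousAt_mirror hpx q).eventually (hL.isClosed.isOpen_compl.mem_nhds hρq)).and
      ((isOpen_lt (by fun_prop) continuous_const).mem_nhds hlt)
  obtain ⟨y, ⟨hρy, hy⟩, hyL⟩ :=
    mem_closure_iff_nhds.mp (show x ∈ closure Lᶜ by rw [closure_compl]; exact hx.2) _ hnear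
  exact (hL.mirror_mem_or hD hp hpq hyL).elim hρy hy.not_ge

/- The partner of `y` is the image of `q` under the mirror of `p` and `y`, and also the image of `p`
under the mirror of `q` and `y`. -/
lemma IsExtremal.exists_add_eq_add [NeZero n] {D : ℝ} (hD : 0 < D) (hDπ : D < Real.pi)
    {L : Set (Sph n)} (hL : IsExtremal D L)
    (huniq : ∀ p ∈ frontier L, (partners D L p).Subsingleton) {p q y : Sph n}
    (hp : p ∈ frontier L) (hq : q ∈ partners D L p) (hy : y ∈ frontier L) :
    ∃ r, gd y r = D ∧ (p : Esp n) + q = y + r := by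
  have hpq : gd p q = D := hq.2
  have hpL : p ∈ L := hL.isClosed.frontier_subset hp
  have hqfr := hL.partners_subset_frontier hDπ hpL hq
  have hp' : p ∈ partners D L q := ⟨hpL, by rw [gd_comm, hpq]⟩
  rcases eq_or_ne p y with rfl | hpy
  · exact ⟨q, hpq, rfl⟩
  rcases eq_or_ne q y with rfl | hqy
  · exact ⟨p, hp'.2, add_comm _ _⟩
  have hr : mirror p y q ∈ partners D L y :=
    ⟨hL.mirror_mem hD hp ((huniq p hp).eq_singleton_of_mem hq) hy hpy,
      by rw [← gd_mirror_left, mirror_right, hpq]⟩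
  have hr' : mirror q y p ∈ partners D L y :=
    ⟨hL.mirror_mem hD hqfr ((huniq q hqfr).eq_singleton_of_mem hp') hy hqy,
      by rw [← gd_mirror_left, mirror_right, hp'.2]⟩
  have hne : p ≠ q := gd_pos_iff.mp (hpq ▸ hD)
  exact ⟨_, hr.2, add_eq_add_mirror hne hpy hqy (huniq y hy hr hr')⟩

lemma IsExtremal.exists_frontier_gd_eq [NeZero n] {D : ℝ} (hD : 0 < D) (hDπ : D < Real.pi)
    {L : Set (Sph n)} (hL : IsExtremal D L)
    (huniq : ∀ p ∈ frontier L, (partners D L p).Subsingleton) :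
    ∃ w : Sph n, ∀ y ∈ frontier L, gd y w = D / 2 := by
  rcases (frontier L).eq_empty_or_nonempty with hempty | ⟨p, hp⟩
  · obtain ⟨w⟩ : Nonempty (Sph n) := (NormedSpace.sphere_nonempty.mpr zero_le_one).to_subtype
    exact ⟨w, by simp [hempty]⟩
  obtain ⟨q, hq⟩ := hL.partners_nonempty hD hp
  obtain ⟨w, hw⟩ := exists_midpoint p q
  refine ⟨w, fun y hy => ?_⟩
  obtain ⟨r, hyr, hsum⟩ := hL.exists_add_eq_add hD hDπ huniq hp hq hy
  rw [← hyr]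
  exact gd_midpoint (hyr ▸ hDπ) (by rw [← hsum, hw, hq.2, hyr])

lemma GdLE.subset_sphBall_of_frontier [NeZero n] {D : ℝ} (hDπ : D < Real.pi) {L : Set (Sph n)}
    (h : GdLE D L L) {w : Sph n} {r : ℝ} (hr : r < Real.pi / 2)
    (hfr : ∀ y ∈ frontier L, gd y w = r) : L ⊆ sphBall w r := by
  intro x hx
  by_contra hxw
  replace hxw : r < gd x w := not_le.mp hxw
  have hcap : {y | r < gd y w} ⊆ interior L :=
    subset_interior_of_disjoint_frontier (isPreconnected_setOf_lt_gd w r)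
      (Set.disjoint_left.mpr fun y (hy : r < gd y w) hyfr => hy.ne' (hfr y hyfr))
      ⟨x, hxw, hx⟩
  obtain ⟨t, ht⟩ := exists_gd_eq w (r := Real.pi / 2) (by positivity) (by linarith [Real.pi_pos])
  have hanti : gd t (-t) ≤ D := by
    refine h t (interior_subset (hcap ?_)) (-t) (interior_subset (hcap ?_))
    · rwa [mem_ofPred_eq, ht]
    · rw [mem_ofPred_eq, gd_neg_left, ht]
      linarith
  rw [gd_neg_right, gd_self] at hanti
  linarith

theorem IsExtremal.exists_subset_sphBall [NeZero n] {D : ℝ} (hD : 0 < D) (hDπ : D < Real.pi)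
    {L : Set (Sph n)} (hL : IsExtremal D L)
    (huniq : ∀ p ∈ frontier L, (partners D L p).Subsingleton) :
    ∃ w : Sph n, L ⊆ sphBall w (D / 2) := by
  obtain ⟨w, hw⟩ := hL.exists_frontier_gd_eq hD hDπ huniq
  exact ⟨w, hL.gdLE.subset_sphBall_of_frontier hDπ (by linarith) hw⟩

end Rigidity

section ParallelSets
variable {n : ℕ}

/-- The closed outer parallel set of `K`: the points at geodesic distance at most `s` from some
point of `K`. -/
def parallelSet (K : Set (Sph n)) (s : ℝ) : Set (Sph n) := {y | ∃ x ∈ K, gd x y ≤ s}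

lemma isClosed_parallelSet {K : Set (Sph n)} (hK : IsClosed K) (s : ℝ) :
    IsClosed (parallelSet K s) := by
  have hgraph : IsClosed {P : Sph n × Sph n | P.1 ∈ K ∧ gd P.1 P.2 ≤ s} :=
    (hK.preimage continuous_fst).inter
      (isClosed_le (continuous_gd continuous_fst continuous_snd) continuous_const)
  have himage : parallelSet K s = Prod.snd '' {P : Sph n × Sph n | P.1 ∈ K ∧ gd P.1 P.2 ≤ s} := by
    ext y
    simp [parallelSet]
  rw [himage]
  exact (hgraph.isCompact.image continuous_snd).isClosed

lemma GdLE.parallelSet_right {D : ℝ} {A B : Set (Sph n)} (h : GdLE D A B) (s : ℝ) :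
    GdLE (D + s) A (parallelSet B s) := by
  rintro x hx y ⟨b, hb, hby⟩
  linarith [gd_triangle x b y, h x hx b hb]

/- The antipode of a point outside `parallelSet K s` has distance at most `π - s` from all of
`K`. -/
lemma sphVol_setOf_gd_lt_le_parallelSet [NeZero n] (e : Sph n) {K : Set (Sph n)} (hK : IsClosed K)
    {r s : ℝ} (hr : 0 < r) (hrπ : r ≤ Real.pi) (hs : 0 < s)
    (hvol : sphVol n (sphBall e r) ≤ sphVol n K) :
    sphVol n {x | gd x e < r + s} ≤ sphVol n (parallelSet K s) := by
  let N := {y | ∀ x ∈ K, gd x y ≤ Real.pi - s}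
  have hN : IsClosed N := by
    simp only [N, ofPred_forall]
    exact isClosed_biInter fun x _ => isClosed_le (by fun_prop) (by fun_prop)
  have hKN : GdLE (Real.pi - s) K N := fun x hx y hy => hy x hx
  have hanti : (parallelSet K s)ᶜ ⊆ Neg.neg ⁻¹' N := by
    intro y hy x hx
    have hxy : s < gd x y := by
      by_contra! hle
      exact hy ⟨x, hx, hle⟩
    rw [gd_neg_right]
    linarith
  have hball : Neg.neg ⁻¹' sphBall e (Real.pi - s - r) = {x | gd x e < r + s}ᶜ := by
    ext x
    simp only [sphBall, mem_preimage, mem_ofPred_eq, mem_compl_iff, not_lt, gd_neg_left]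
    constructor <;> intro h <;> linarith
  have hcompl : sphVol n (parallelSet K s)ᶜ ≤ sphVol n {x | gd x e < r + s}ᶜ :=
    calc sphVol n (parallelSet K s)ᶜ
      _ ≤ sphVol n N := (measure_mono hanti).trans_eq (sphVol_neg_preimage N)
      _ ≤ sphVol n (sphBall e (Real.pi - s - r)) :=
        hKN.sphVol_le hK hN hr hrπ (by linarith) e hvol
      _ = sphVol n {x | gd x e < r + s}ᶜ := by rw [← hball, sphVol_neg_preimage]
  have hopen : IsOpen {x | gd x e < r + s} := isOpen_lt (by fun_prop) (by fun_prop)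
  rw [measure_compl (isClosed_parallelSet hK s).measurableSet (measure_ne_top _ _),
    measure_compl hopen.measurableSet (measure_ne_top _ _)] at hcompl
  exact (ENNReal.sub_le_sub_iff_left (measure_mono (subset_univ _)) (measure_ne_top _ _)).mp hcompl

lemma GdLE.sphVol_le_sphBall_half [NeZero n] {D : ℝ} {M : Set (Sph n)} (h : GdLE D M M)
    (hM : IsClosed M) (hD : 0 < D) (hDπ : D < Real.pi) (e : Sph n) :
    sphVol n M ≤ sphVol n (sphBall e (D / 2)) := by
  rcases le_total (sphVol n M) (sphVol n (sphBall e (D / 2))) with hle | hle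
  · exact hle
  · simpa only [sub_half] using h.sphVol_le hM hM (half_pos hD) (by linarith) hDπ e hle

lemma GdLE.isExtremal_parallelSet [NeZero n] {D s : ℝ} {K : Set (Sph n)} (h : GdLE D K K)
    (hK : IsClosed K) (hD : 0 < D) (hs : 0 < s) (hDs : D + 2 * s < Real.pi) {e : Sph n}
    (hvol : sphVol n (sphBall e (D / 2)) ≤ sphVol n K)
    (hnull : sphVol n {x | gd x e = D / 2 + s} = 0) :
    IsExtremal (D + 2 * s) (parallelSet K s) where
  isClosed := isClosed_parallelSet hK s
  gdLE := by
    have hP := (h.parallelSet_right s).symm.parallelSet_right s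
    rwa [add_assoc, ← two_mul] at hP
  sphVol_le M hM hMD :=
    calc sphVol n M
      _ ≤ sphVol n (sphBall e ((D + 2 * s) / 2)) :=
        hMD.sphVol_le_sphBall_half hM (by linarith) hDs e
      _ = sphVol n ({x | gd x e < D / 2 + s} ∪ {x | gd x e = D / 2 + s}) := by
        congr 1
        ext x
        simp only [sphBall, mem_ofPred_eq, mem_union, ← le_iff_lt_or_eq, add_div,
          mul_div_cancel_left₀ s two_ne_zero]
      _ ≤ sphVol n {x | gd x e < D / 2 + s} + sphVol n {x | gd x e = D / 2 + s} :=
        measure_union_le _ _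
      _ = sphVol n {x | gd x e < D / 2 + s} := by rw [hnull, add_zero]
      _ ≤ sphVol n (parallelSet K s) :=
        sphVol_setOf_gd_lt_le_parallelSet e hK (half_pos hD) (by linarith) hs hvol

/- A segment of length `D + 2 * s` from `p` passes through every point of `K` at distance at most
`s` from `p`, which determines its direction. -/
lemma GdLE.subsingleton_partners_parallelSet {D s : ℝ} {K : Set (Sph n)} (h : GdLE D K K)
    (hs : 0 < s) (hDs : D + 2 * s < Real.pi) {p : Sph n} (hp : p ∈ parallelSet K s) :
    (partners (D + 2 * s) (parallelSet K s) p).Subsingleton := by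
  obtain ⟨a, ha, hap⟩ := hp
  rw [gd_comm] at hap
  have hD : 0 ≤ D := (gd_nonneg a a).trans (h a ha a ha)
  have hsplit {q} (hq : q ∈ partners (D + 2 * s) (parallelSet K s) p) :
      gd p a = s ∧ gd a q = D + s := by
    have haq := h.parallelSet_right s a ha q hq.1
    have hpq : gd p q = D + 2 * s := hq.2
    constructor <;> linarith [gd_triangle p a q]
  intro q hq q' hq'
  obtain ⟨hpa, haq⟩ := hsplit hq
  obtain ⟨-, haq'⟩ := hsplit hq'
  have hpq : gd p q = D + 2 * s := hq.2
  have hpq' : gd p q' = D + 2 * s := hq'.2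
  exact eq_of_gd_add_gd_eq (x := p) (a := a) (gd_pos_iff.mp (hpa ▸ hs)) (by linarith)
    (by linarith) (by linarith) (by linarith)

lemma subset_sphBall_of_parallelSet_subset [NeZero n] {K : Set (Sph n)} {w : Sph n} {r s : ℝ}
    (hs : 0 ≤ s) (hrs : r + s < Real.pi) (h : parallelSet K s ⊆ sphBall w (r + s)) :
    K ⊆ sphBall w r := by
  intro x hx
  by_contra hxw
  replace hxw : r < gd w x := gd_comm x w ▸ not_le.mp hxw
  obtain ⟨g, -, hgw, hgx, hg⟩ := exists_unit_speed_geodesic w x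
  obtain ⟨t, hxt, hts, htπ, hrt⟩ : ∃ t, gd w x ≤ t ∧ t ≤ gd w x + s ∧ t ≤ Real.pi ∧ r + s < t :=
    ⟨min (gd w x + s) Real.pi, le_min (by linarith) (gd_le_pi w x), min_le_left _ _,
      min_le_right _ _, lt_min (by linarith) hrs⟩
  have h0 := gd_nonneg w x
  have hgt : g t ∈ parallelSet K s := by
    have habs : |gd w x - t| = t - gd w x := by rw [abs_sub_comm, abs_of_nonneg (by linarith)]
    refine ⟨x, hx, ?_⟩
    nth_rewrite 1 [← hgx]
    rw [hg _ _ (by linarith), habs]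
    linarith
  have hle : gd (g t) w ≤ r + s := h hgt
  have habs : |t - 0| = t := by rw [sub_zero, abs_of_nonneg (by linarith)]
  rw [← hgw, hg _ _ (by linarith), habs] at hle
  linarith

end ParallelSets

section Equality
variable {n : ℕ}

lemma eq_sphBall_of_sphVol_le [NeZero n] {K : Set (Sph n)} (hK : IsClosed K) {w : Sph n} {r : ℝ}
    (hr : 0 < r) (hsub : K ⊆ sphBall w r) (hvol : sphVol n (sphBall w r) ≤ sphVol n K) :
    K = sphBall w r := by
  have hopen : IsOpen {x | gd x w < r} := isOpen_lt (by fun_prop) (by fun_prop)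
  have hunion : K ∪ {x | gd x w < r} ⊆ sphBall w r :=
    union_subset hsub fun x (hx : gd x w < r) => hx.le
  refine hsub.antisymm ?_
  rw [← closure_setOf_gd_lt w hr]
  exact closure_minimal (subset_of_measure_union_le hopen hK (measure_ne_top _ _)
    ((measure_mono hunion).trans hvol)) hK

lemma gdLE_of_sphDiam_le {X : Set (Sph n)} {D : ℝ} (h : sphDiam X ≤ D) : GdLE D X X := by
  have hbdd : BddAbove {r | ∃ x ∈ X, ∃ y ∈ X, r = gd x y} := by
    refine ⟨Real.pi, ?_⟩
    rintro _ ⟨x, -, y, -, rfl⟩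
    exact gd_le_pi x y
  exact fun x hx y hy => (le_csSup hbdd ⟨x, hx, y, hy, rfl⟩).trans h

theorem spherical_isodiametric_equality_general [NeZero n] {D : ℝ} (hD0 : 0 < D) (hD1 : D < Real.pi)
    (z : Sph n) {X : Set (Sph n)} (hdiam : sphDiam X ≤ D)
    (hvol : sphVol n (sphBall z (D / 2)) ≤ sphVol n X) :
    ∃ w : Sph n, closure X = sphBall w (D / 2) := by
  have hX : IsClosed (closure X) := isClosed_closure
  have hdist : GdLE D (closure X) (closure X) := (gdLE_of_sphDiam_le hdiam).closure
  have hvolX := hvol.trans (measure_mono subset_closure)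
  obtain ⟨t, ⟨hDt, htπ⟩, hnull⟩ := exists_mem_Ioo_measure_level_eq_zero (μ := sphVol n)
    (f := fun x => gd x z) (by fun_prop : Continuous fun x => gd x z).measurable
    (show D / 2 < Real.pi / 2 by linarith)
  obtain ⟨s, rfl⟩ : ∃ s, t = D / 2 + s := ⟨t - D / 2, by ring⟩
  have hs : 0 < s := by linarith
  have hext := hdist.isExtremal_parallelSet hX hD0 hs (by linarith) hvolX hnull
  obtain ⟨w, hw⟩ := hext.exists_subset_sphBall (by linarith) (by linarith) fun p hp =>
    hdist.subsingleton_partners_parallelSet hs (by linarith) (hext.isClosed.frontier_subset hp)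
  rw [add_div, mul_div_cancel_left₀ s two_ne_zero] at hw
  rw [sphVol_sphBall_eq z w] at hvolX
  refine ⟨w, eq_sphBall_of_sphVol_le hX (half_pos hD0) ?_ hvolX⟩
  exact subset_sphBall_of_parallelSet_subset hs.le (by linarith) hw

end Equality

/-- equality case of the spherical isodiametric inequality. -/
theorem spherical_isodiametric_equality (n : ℕ) (hn : 2 ≤ n) (D : ℝ) (hD0 : 0 < D)
    (hD1 : D < Real.pi) (z : Sph n) (X : Set (Sph n)) (hX : MeasurableSet X)
    (hdiam : sphDiam X ≤ D)
    (hvol : sphVol n X = sphVol n (sphBall z (D / 2))) :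
    ∃ w : Sph n, closure X = sphBall w (D / 2) := by
  have : NeZero n := ⟨by omega⟩
  exact spherical_isodiametric_equality_general hD0 hD1 z hdiam hvol.ge
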